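/- Let 𝔓 = (D, Σ, Σi, G, R, d0, m0) be an asynchronous program with G in normal form, let c = (d1, σ, d2) ∈ D × Σ × D be a context, and let G^c be the associated initialized CFG. Then for every multiset m over Σ: (d1, {σ}) →σ (d2, m) if and only if m ∈ Parikh(L(G^c)). -/

import Mathlib

/-!
A terminal derivation of a normal-form grammar from a single variable is the same thing as a binary
parse tree (`CFG'.Gen`), and a derivation `d ⇒* w·d'` of a regular grammar is the same thing as a
path labelled `w` from `d` to `d'` in the automaton `R` (`CFG'.Run`). The grammar `G^R` is again in
normal form, and it is the classical triple construction: by induction on parse trees, `[d A d']`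
generates `v` in `G^R` exactly when `v` is the projection of some `w` that `A` generates in `G` and
that labels a path from `d` to `d'` (`gen_projProduct_of_gen`, `exists_gen_of_gen_projProduct`);
at a binary node, the middle state is the one at which the path for `u ++ v` is cut. Finally, the
remainder multiset in a transition out of `(d1, {σ})` has to be empty, so that the successor
multiset is exactly the Parikh image of the projected word.
-/

/-- A context-free grammar given by a set of productions. -/
structure CFG' (T N : Type) where
  P : Set (N × List (Symbol T N))

namespace CFG'

variable {T N : Type}

/-- One-step derivation relation of a grammar. -/
inductive Step (G : CFG' T N) : List (Symbol T N) → List (Symbol T N) → Prop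
  | step {A : N} {w : List (Symbol T N)} (y z : List (Symbol T N)) :
      (A, w) ∈ G.P → Step G (y ++ [Symbol.nonterminal A] ++ z) (y ++ w ++ z)

/-- Reflexive-transitive closure of the one-step derivation relation. -/
def Derives (G : CFG' T N) : List (Symbol T N) → List (Symbol T N) → Prop :=
  Relation.ReflTransGen G.Step

/-- Every production lies in `X × (XX ∪ Γ ∪ {ε})`. -/
def NormalForm (G : CFG' T N) : Prop :=
  ∀ p ∈ G.P,
    (∃ B C : N, p.2 = [Symbol.nonterminal B, Symbol.nonterminal C]) ∨
    (∃ a : T, p.2 = [Symbol.terminal a]) ∨ p.2 = []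

/-- Every production lies in `X × ((Γ·X) ∪ {ε})`. -/
def RegularForm (G : CFG' T N) : Prop :=
  ∀ p ∈ G.P,
    (∃ (a : T) (B : N), p.2 = [Symbol.terminal a, Symbol.nonterminal B]) ∨ p.2 = []

end CFG'
/-- The projected product grammar `G^R` over `Σ` of a normal-form CFG `G` over `Σ ∪ Σi`
and a regular grammar `R` over `Σ ∪ Σi`.  A terminal `Sum.inl σ` is a symbol of `Σ`
and `Sum.inr τ` a symbol of `Σi`; the right-hand side `Proj_Σ(a)` of the second kind
of production keeps `a` exactly when it lies in `Σ`. -/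
def projProductGrammar {Sg Si N D : Type} (G : CFG' (Sg ⊕ Si) N) (R : CFG' (Sg ⊕ Si) D) :
    CFG' Sg (D × N × D) where
  P := { p |
    (∃ (A : N) (d : D),
      (A, ([] : List (Symbol (Sg ⊕ Si) N))) ∈ G.P ∧ p = ((d, A, d), [])) ∨
    (∃ (A : N) (a : Sg ⊕ Si) (d d' : D),
      (A, [Symbol.terminal a]) ∈ G.P ∧
      (d, [Symbol.terminal a, Symbol.nonterminal d']) ∈ R.P ∧
      p = ((d, A, d'), (a.getLeft?).toList.map Symbol.terminal)) ∨
    (∃ (A B C : N) (d0 d1 d2 : D),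
      (A, [Symbol.nonterminal B, Symbol.nonterminal C]) ∈ G.P ∧
      p = ((d0, A, d2),
        [Symbol.nonterminal (d0, B, d1), Symbol.nonterminal (d1, C, d2)])) }
/-- An asynchronous program: a CFG `G` over `Σ ⊕ Σi` (posts and internal actions) with a
handler variable `X σ` for each handler name `σ`, a regular grammar `R` over `Σ ⊕ Σi`
modelling the global-state changes, an initial state `d0` and an initial multiset `m0`
of pending handler instances. -/
structure AsyncProgram (D Sg Si N : Type) where
  G : CFG' (Sg ⊕ Si) N
  R : CFG' (Sg ⊕ Si) D
  X : Sg → N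
  d0 : D
  m0 : Multiset Sg

/-- The transition relation of an asynchronous program:
`(d, m ⊕ {σ}) →σ (d', m ⊕ Parikh(Proj_Σ(w)))` whenever `d ⇒*_R w·d'` and `X_σ ⇒*_G w`. -/
def AsyncProgram.Trans {D Sg Si N : Type} (P : AsyncProgram D Sg Si N) (σ : Sg)
    (c c' : D × Multiset Sg) : Prop :=
  ∃ (m : Multiset Sg) (w : List (Sg ⊕ Si)),
    c.2 = m + {σ} ∧
    c'.2 = m + ↑(w.filterMap Sum.getLeft?) ∧
    P.R.Derives [Symbol.nonterminal c.1]
      (w.map Symbol.terminal ++ [Symbol.nonterminal c'.1]) ∧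
    P.G.Derives [Symbol.nonterminal (P.X σ)] (w.map Symbol.terminal)

namespace CFG'

variable {T N : Type}

/-- `G.Gen A w`: there is a parse tree with root `A` and yield `w`, all of whose nodes use
productions of the three normal-form shapes. -/
inductive Gen (G : CFG' T N) : N → List T → Prop
  | eps {A : N} : (A, []) ∈ G.P → Gen G A []
  | term {A : N} {a : T} : (A, [Symbol.terminal a]) ∈ G.P → Gen G A [a]
  | bin {A B C : N} {u v : List T} :
      (A, [Symbol.nonterminal B, Symbol.nonterminal C]) ∈ G.P →
      Gen G B u → Gen G C v → Gen G A (u ++ v)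

/-- Forests of parse trees: the sentential form `s` yields `w` when `w` is the concatenation of the
terminals of `s` and of yields of parse trees rooted at the variables of `s`. -/
def Gens (G : CFG' T N) : List (Symbol T N) → List T → Prop
  | [], w => w = []
  | Symbol.terminal a :: s, w => ∃ v, w = a :: v ∧ Gens G s v
  | Symbol.nonterminal A :: s, w => ∃ u v, w = u ++ v ∧ G.Gen A u ∧ Gens G s v

/-- `G.Run d w e`: in a regular grammar, seen as an automaton with transitions `d → a·f`, the word
`w` labels a path from `d` to `e`. -/
def Run (G : CFG' T N) : N → List T → N → Prop
  | d, [], e => d = e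
  | d, a :: w, e => ∃ f, (d, [Symbol.terminal a, Symbol.nonterminal f]) ∈ G.P ∧ Run G f w e

/-! ### Parse trees and derivations -/

theorem Step.append_context {G : CFG' T N} {s t : List (Symbol T N)} (h : G.Step s t)
    (p q : List (Symbol T N)) : G.Step (p ++ s ++ q) (p ++ t ++ q) := by
  cases h with
  | step y z hp => simpa using Step.step (p ++ y) (z ++ q) hp

theorem Derives.append_context {G : CFG' T N} {s t : List (Symbol T N)} (h : G.Derives s t)
    (p q : List (Symbol T N)) : G.Derives (p ++ s ++ q) (p ++ t ++ q) := by
  induction h with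
  | refl => exact Relation.ReflTransGen.refl
  | tail _ hst ih => exact ih.tail (hst.append_context p q)

theorem Derives.of_mem {G : CFG' T N} {A : N} {s : List (Symbol T N)} (h : (A, s) ∈ G.P) :
    G.Derives [Symbol.nonterminal A] s :=
  Relation.ReflTransGen.single (by simpa using Step.step [] [] h)

theorem Gen.derives {G : CFG' T N} {A : N} {w : List T} (h : G.Gen A w) :
    G.Derives [Symbol.nonterminal A] (w.map Symbol.terminal) := by
  induction h with
  | eps h => exact Derives.of_mem h
  | term h => exact Derives.of_mem h
  | @bin A B C u v h _ _ ihu ihv =>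
    have h1 := ihu.append_context [] [Symbol.nonterminal C]
    have h2 := ihv.append_context (u.map Symbol.terminal) []
    simp only [List.nil_append, List.append_nil, List.singleton_append] at h1 h2
    rw [List.map_append]
    exact ((Derives.of_mem h).trans h1).trans h2

theorem gens_append {G : CFG' T N} {s t : List (Symbol T N)} {w : List T} :
    G.Gens (s ++ t) w ↔ ∃ u v, w = u ++ v ∧ G.Gens s u ∧ G.Gens t v := by
  induction s generalizing w with
  | nil => simp [Gens]
  | cons x s ih =>
    cases x with
    | terminal a =>
      simp only [List.cons_append, Gens, ih]
      constructor
      · rintro ⟨_, rfl, u, v, rfl, hu, hv⟩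
        exact ⟨a :: u, v, rfl, ⟨u, rfl, hu⟩, hv⟩
      · rintro ⟨_, v, rfl, ⟨u, rfl, hu⟩, hv⟩
        exact ⟨u ++ v, rfl, u, v, rfl, hu, hv⟩
    | nonterminal A =>
      simp only [List.cons_append, Gens, ih]
      constructor
      · rintro ⟨r, _, rfl, hr, u, v, rfl, hu, hv⟩
        exact ⟨r ++ u, v, by simp, ⟨r, u, rfl, hr, hu⟩, hv⟩
      · rintro ⟨_, v, rfl, ⟨r, u, rfl, hr, hu⟩, hv⟩
        exact ⟨r, u ++ v, by simp, hr, u, v, rfl, hu, hv⟩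

theorem gens_map_terminal (G : CFG' T N) (w : List T) : G.Gens (w.map Symbol.terminal) w := by
  induction w with
  | nil => rfl
  | cons a w ih => exact ⟨w, rfl, ih⟩

/-- In normal form, a forest for the right-hand side of a production is closed off by a root. -/
theorem NormalForm.gen_of_gens {G : CFG' T N} (hG : G.NormalForm) {A : N}
    {s : List (Symbol T N)} {w : List T} (h : (A, s) ∈ G.P) (hs : G.Gens s w) : G.Gen A w := by
  rcases hG _ h with ⟨B, C, rfl⟩ | ⟨a, rfl⟩ | rfl
  · obtain ⟨u, _, rfl, hu, v, _, rfl, hv, rfl⟩ := hs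
    simpa using Gen.bin h hu hv
  · obtain ⟨_, rfl, rfl⟩ := hs
    exact Gen.term h
  · obtain rfl := hs
    exact Gen.eps h

theorem NormalForm.gens_of_step {G : CFG' T N} (hG : G.NormalForm) {s t : List (Symbol T N)}
    {w : List T} (h : G.Step s t) (ht : G.Gens t w) : G.Gens s w := by
  cases h with
  | step y z hp =>
    obtain ⟨_, v, rfl, hyr, hz⟩ := gens_append.1 ht
    obtain ⟨u, r, rfl, hy, hr⟩ := gens_append.1 hyr
    exact gens_append.2 ⟨u ++ r, v, rfl, gens_append.2
      ⟨u, r, rfl, hy, r, [], by simp, hG.gen_of_gens hp hr, rfl⟩, hz⟩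

theorem NormalForm.derives_iff_gen {G : CFG' T N} (hG : G.NormalForm) {A : N} {w : List T} :
    G.Derives [Symbol.nonterminal A] (w.map Symbol.terminal) ↔ G.Gen A w := by
  refine ⟨fun h => ?_, Gen.derives⟩
  have key : G.Gens [Symbol.nonterminal A] w := by
    generalize [Symbol.nonterminal A] = s at h ⊢
    induction h using Relation.ReflTransGen.head_induction_on with
    | refl => exact gens_map_terminal G w
    | head hst _ ih => exact hG.gens_of_step hst ih
  obtain ⟨u, _, rfl, hu, rfl⟩ := key
  simpa using hu

/-! ### Paths and regular derivations -/

theorem run_append {G : CFG' T N} {d d' : N} {u v : List T} :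
    G.Run d (u ++ v) d' ↔ ∃ e, G.Run d u e ∧ G.Run e v d' := by
  induction u generalizing d with
  | nil => simp [Run]
  | cons a u ih =>
    simp only [List.cons_append, Run, ih]
    constructor
    · rintro ⟨f, hf, e, h1, h2⟩
      exact ⟨e, ⟨f, hf, h1⟩, h2⟩
    · rintro ⟨e, ⟨f, hf, h1⟩, h2⟩
      exact ⟨f, hf, e, h1, h2⟩

theorem Run.derives {G : CFG' T N} {d d' : N} {w : List T} (h : G.Run d w d') :
    G.Derives [Symbol.nonterminal d] (w.map Symbol.terminal ++ [Symbol.nonterminal d']) := by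
  induction w generalizing d with
  | nil =>
    obtain rfl := h
    exact Relation.ReflTransGen.refl
  | cons a w ih =>
    obtain ⟨e, he, h⟩ := h
    have h1 := (ih h).append_context [Symbol.terminal a] []
    simp only [List.append_nil, List.singleton_append] at h1
    exact (Derives.of_mem he).trans h1

theorem not_mem_map_terminal (A : N) (w : List T) :
    Symbol.nonterminal A ∉ w.map (Symbol.terminal (N := N)) := by
  simp

/-- The only variable occurrence in `w·d` is the final one. -/
theorem eq_of_map_terminal_append {w : List T} {d A : N} {y z : List (Symbol T N)}
    (h : w.map Symbol.terminal ++ [Symbol.nonterminal d] = y ++ [Symbol.nonterminal A] ++ z) :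
    y = w.map Symbol.terminal ∧ A = d ∧ z = [] := by
  induction w generalizing y with
  | nil =>
    cases y with
    | nil => simp_all
    | cons x y => simp at h
  | cons a w ih =>
    cases y with
    | nil => simp at h
    | cons x y =>
      simp only [List.map_cons, List.cons_append, List.cons.injEq] at h ⊢
      obtain ⟨h1, h2, h3⟩ := ih h.2
      exact ⟨⟨h.1.symm, h1⟩, h2, h3⟩

/-- Every sentential form reachable from a variable `d` of a regular grammar is either a terminal
word, or a terminal word `w` followed by a variable at the end of a path labelled `w`. -/
theorem RegularForm.run_or_terminal {G : CFG' T N} (hG : G.RegularForm) {d : N}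
    {s : List (Symbol T N)} (h : G.Derives [Symbol.nonterminal d] s) :
    (∃ (w : List T) (d' : N), s = w.map Symbol.terminal ++ [Symbol.nonterminal d'] ∧ G.Run d w d') ∨
      ∃ w : List T, s = w.map Symbol.terminal := by
  induction h with
  | refl => exact Or.inl ⟨[], d, rfl, rfl⟩
  | @tail s t _ hst ih =>
    cases hst with
    | @step A r y z hp =>
      rcases ih with ⟨w, d', hs, hrun⟩ | ⟨w, hs⟩
      · obtain ⟨rfl, rfl, rfl⟩ := eq_of_map_terminal_append hs.symm
        rcases hG _ hp with ⟨a, B, rfl⟩ | rfl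
        · exact Or.inl ⟨w ++ [a], B, by simp, run_append.2 ⟨A, hrun, B, hp, rfl⟩⟩
        · exact Or.inr ⟨w, by simp⟩
      · exact absurd (hs ▸ by simp) (not_mem_map_terminal A w)

theorem RegularForm.derives_iff_run {G : CFG' T N} (hG : G.RegularForm) {d d' : N} {w : List T} :
    G.Derives [Symbol.nonterminal d] (w.map Symbol.terminal ++ [Symbol.nonterminal d']) ↔
      G.Run d w d' := by
  refine ⟨fun h => ?_, Run.derives⟩
  rcases hG.run_or_terminal h with ⟨v, e, hs, hrun⟩ | ⟨v, hs⟩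
  · obtain ⟨h1, rfl, -⟩ := eq_of_map_terminal_append (z := []) (by simpa using hs)
    have hinj : Function.Injective (Symbol.terminal : T → Symbol T N) :=
      fun _ _ h => Symbol.terminal.inj h
    rwa [← hinj.list_map h1]
  · exact absurd (hs ▸ by simp) (not_mem_map_terminal d' v)

end CFG'

/-! ### The product grammar -/

section Product

variable {Sg Si N D : Type} {G : CFG' (Sg ⊕ Si) N} {R : CFG' (Sg ⊕ Si) D}

theorem projProductGrammar_normalForm (G : CFG' (Sg ⊕ Si) N) (R : CFG' (Sg ⊕ Si) D) :
    (projProductGrammar G R).NormalForm := by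
  rintro p (⟨A, d, -, rfl⟩ | ⟨A, a | a, d, d', -, -, rfl⟩ | ⟨A, B, C, d0, d1, d2, -, rfl⟩)
  · exact Or.inr (Or.inr rfl)
  · exact Or.inr (Or.inl ⟨a, rfl⟩)
  · exact Or.inr (Or.inr rfl)
  · exact Or.inl ⟨_, _, rfl⟩

theorem gen_projProduct_of_gen {A : N} {w : List (Sg ⊕ Si)} (h : G.Gen A w) {d d' : D}
    (hr : R.Run d w d') :
    (projProductGrammar G R).Gen (d, A, d') (w.filterMap Sum.getLeft?) := by
  induction h generalizing d d' with
  | eps h =>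
    obtain rfl := hr
    exact .eps (Or.inl ⟨_, _, h, rfl⟩)
  | @term A a h =>
    obtain ⟨_, hd, rfl⟩ := hr
    -- An internal action is erased, so its leaf in `G` becomes an `ε`-leaf in `G^R`.
    rcases a with a | a
    · exact .term (Or.inr (Or.inl ⟨A, Sum.inl a, _, _, h, hd, rfl⟩))
    · exact .eps (Or.inr (Or.inl ⟨A, Sum.inr a, _, _, h, hd, rfl⟩))
  | bin h _ _ ihu ihv =>
    obtain ⟨e, h1, h2⟩ := CFG'.run_append.1 hr
    rw [List.filterMap_append]
    exact .bin (Or.inr (Or.inr ⟨_, _, _, _, _, _, h, rfl⟩)) (ihu h1) (ihv h2)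

theorem exists_gen_of_gen_projProduct {X : D × N × D} {v : List Sg}
    (h : (projProductGrammar G R).Gen X v) :
    ∃ w : List (Sg ⊕ Si), w.filterMap Sum.getLeft? = v ∧ G.Gen X.2.1 w ∧
      R.Run X.1 w X.2.2 := by
  induction h with
  | eps h =>
    rcases h with ⟨A, d, hA, he⟩ | ⟨A, a | a, d, d', hA, hd, he⟩ | ⟨A, B, C, d0, d1, d2, hA, he⟩
    · cases he
      exact ⟨[], rfl, .eps hA, rfl⟩
    · simp at he
    · simp only [Prod.mk.injEq] at he
      obtain ⟨rfl, -⟩ := he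
      exact ⟨[Sum.inr a], rfl, .term hA, _, hd, rfl⟩
    · simp at he
  | term h =>
    rcases h with ⟨A, d, hA, he⟩ | ⟨A, a | a, d, d', hA, hd, he⟩ | ⟨A, B, C, d0, d1, d2, hA, he⟩
    · simp at he
    · cases he
      exact ⟨[Sum.inl _], rfl, .term hA, _, hd, rfl⟩
    · simp at he
    · simp at he
  | bin h _ _ ihu ihv =>
    rcases h with ⟨A, d, hA, he⟩ | ⟨A, a | a, d, d', hA, hd, he⟩ | ⟨A, B, C, d0, d1, d2, hA, he⟩
    · simp at he
    · simp at he
    · simp at he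
    · cases he
      obtain ⟨u, rfl, hu, hru⟩ := ihu
      obtain ⟨v, rfl, hv, hrv⟩ := ihv
      exact ⟨u ++ v, List.filterMap_append, .bin hA hu hv, CFG'.run_append.2 ⟨_, hru, hrv⟩⟩

end Product

/-- `(d1, {σ}) →σ (d2, m)` iff `m ∈ Parikh(L(G^c))` for the context `c = (d1, σ, d2)`,
where `G^c` is `G^R` initialized at the variable `[d1 X_σ d2]`. -/
theorem asyncTrans_iff_parikh {D Sg Si N : Type}
    [Fintype D] [Fintype Sg] [Fintype Si] [Fintype N]
    (P : AsyncProgram D Sg Si N) (hG : P.G.NormalForm) (hGfin : P.G.P.Finite)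
    (hR : P.R.RegularForm) (hRfin : P.R.P.Finite)
    (d1 d2 : D) (σ : Sg) (m : Multiset Sg) :
    P.Trans σ (d1, {σ}) (d2, m) ↔
      ∃ w : List Sg,
        (projProductGrammar P.G P.R).Derives
          [Symbol.nonterminal (d1, P.X σ, d2)] (w.map Symbol.terminal) ∧
        (↑w : Multiset Sg) = m := by
  constructor
  · rintro ⟨m', w, h1, h2, hr, hg⟩
    -- `{σ} = m' + {σ}` leaves no other pending handler.
    have hm' : m' = 0 := by simpa using h1
    subst hm'
    refine ⟨w.filterMap Sum.getLeft?, ?_, by simpa using h2.symm⟩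
    exact (gen_projProduct_of_gen (hG.derives_iff_gen.1 hg) (hR.derives_iff_run.1 hr)).derives
  · rintro ⟨v, hv, rfl⟩
    obtain ⟨w, rfl, hg, hr⟩ := exists_gen_of_gen_projProduct
      ((projProductGrammar_normalForm P.G P.R).derives_iff_gen.1 hv)
    exact ⟨0, w, by simp, by simp, hr.derives, hg.derives⟩
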